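/- arXiv:1811.00356 — 4 statements merged into one kernel-verified Lean document; each statement's English description precedes it below -/
import Mathlib

section
/- Let p be a prime, G a topologically finitely generated pro-p group, and let k be either ℚ or a finite field with char(k) ≠ p. For every ν ∈ ℕ there are, up to equivalence, only finitely many irreducible representations of G with open kernel whose dimension is not divisible by p^ν: there exist finitely many pairs (n_1, ρ_1), …, (n_r, ρ_r), where each ρ_i : G → GL_{n_i}(k) is an irreducible homomorphism with open kernel, such that every irreducible homomorphism ρ : G → GL_n(k) with open kernel and p^ν ∤ n satisfies n = n_i and ρ = g ρ_i(·) g^{−1} for some i and some g ∈ GL_n(k). -/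
open Matrix

/-- A homomorphism `ρ : G →* GL_n(k)` is irreducible if `n ≥ 1` and the only
`ρ(G)`-invariant subspaces of `k^n` are `0` and `k^n`. -/
def MonoidHom.IsIrreducibleGL {G k : Type*} [Group G] [Field k] {n : ℕ}
    (ρ : G →* GL (Fin n) k) : Prop :=
  1 ≤ n ∧ ∀ W : Submodule k (Fin n → k),
    (∀ g : G, W.map ((ρ g : Matrix (Fin n) (Fin n) k).mulVecLin) ≤ W) → W = ⊥ ∨ W = ⊤



theorem exists_selfcentralizing {Q : Type*} [Group Q] [Finite Q] {p : ℕ} (hp : p.Prime)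
    (hQ : IsPGroup p Q) :
    ∃ A : Subgroup Q, A.Normal ∧ (∀ x ∈ A, ∀ y ∈ A, x * y = y * x) ∧
      ∀ x, (∀ a ∈ A, x * a = a * x) → x ∈ A := by
  have := Fact.mk hp
  obtain ⟨A, hA⟩ := Set.Finite.exists_maximal
    (s := {A : Subgroup Q | A.Normal ∧ ∀ x ∈ A, ∀ y ∈ A, x * y = y * x}) (Set.toFinite _)
    ⟨⊥, inferInstance, by simp⟩
  obtain ⟨⟨hN, hc⟩, hmax⟩ := hA
  refine ⟨A, hN, hc, ?_⟩
  by_contra! hcon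
  obtain ⟨x, hx, hxA⟩ := hcon
  let C := Subgroup.centralizer (A : Set Q)
  have hCn : C.Normal := inferInstance
  let Cb := C.map (QuotientGroup.mk' A)
  have hCbn : Cb.Normal := hCn.map _ (QuotientGroup.mk'_surjective A)
  have hxC : x ∈ C := by
    rw [Subgroup.mem_centralizer_iff]; intro a ha; exact (hx a ha).symm
  let : MulAction (Q ⧸ A) Cb := MulAction.compHom Cb (MulAut.conjNormal (H := Cb))
  have hsm : ∀ (g : Q ⧸ A) (c : Cb), ((g • c : Cb) : Q ⧸ A) = g * c * g⁻¹ := fun g c => rfl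
  have hnt : Nontrivial Cb := by
    refine ⟨⟨⟨QuotientGroup.mk' A x, Subgroup.mem_map_of_mem _ hxC⟩, 1, ?_⟩⟩
    intro h
    apply hxA
    have := congrArg Subtype.val h
    simpa using this
  have hpd : p ∣ Nat.card Cb := by
    have h1 := ((hQ.to_quotient A).to_subgroup Cb).card_eq_or_dvd
    rcases h1 with h1 | h1
    · have := (Nat.card_eq_one_iff_unique.1 h1).1
      exact absurd hnt (not_nontrivial_iff_subsingleton.2 this)
    · exact h1
  obtain ⟨c, hcf, hc1⟩ := (hQ.to_quotient A).exists_fixed_point_of_prime_dvd_card_of_fixed_point Cb hpd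
    (a := 1) (by intro g; apply Subtype.ext; rw [hsm]; simp)
  obtain ⟨c0, hc0C, hc0⟩ := c.2
  have hcen : ∀ g : Q ⧸ A, g * c * g⁻¹ = c := fun g => by rw [← hsm, hcf g]
  let Z := Subgroup.zpowers (c : Q ⧸ A)
  have hZn : Z.Normal := by
    refine ⟨fun z hz g => ?_⟩
    obtain ⟨i, rfl⟩ := hz
    refine ⟨i, ?_⟩
    simp only
    rw [← conj_zpow, hcen]
  have hB : Z.comap (QuotientGroup.mk' A) ∈ {A : Subgroup Q | A.Normal ∧ ∀ x ∈ A, ∀ y ∈ A, x * y = y * x} := by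
    refine ⟨hZn.comap _, ?_⟩
    have key : ∀ x ∈ Z.comap (QuotientGroup.mk' A), ∃ i : ℤ, ∃ a ∈ A, x = c0 ^ i * a := by
      rintro x ⟨i, hi⟩
      refine ⟨i, (c0 ^ i)⁻¹ * x, ?_, by simp⟩
      simp only at hi
      rw [← hc0, ← map_zpow] at hi
      exact QuotientGroup.eq.1 hi
    intro x hx y hy
    obtain ⟨i, a, ha, rfl⟩ := key x hx
    obtain ⟨j, b, hb, rfl⟩ := key y hy
    have hca : ∀ a ∈ A, Commute c0 a := fun a ha => ((Subgroup.mem_centralizer_iff.1 hc0C) a ha).symm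
    have hab : Commute a b := hc a ha b hb
    have h1 : Commute (c0 ^ i * a) (c0 ^ j * b) := by
      apply Commute.mul_left
      · apply Commute.mul_right
        · exact Commute.zpow_zpow_self c0 i j
        · exact (hca b hb).zpow_left i
      · apply Commute.mul_right
        · exact ((hca a ha).zpow_left j).symm
        · exact hab
    exact h1
  have hle : A ≤ Z.comap (QuotientGroup.mk' A) := by
    intro a ha
    rw [Subgroup.mem_comap]
    have : QuotientGroup.mk' A a = 1 := (QuotientGroup.eq_one_iff a).2 ha
    rw [this]; exact one_mem _
  have hc0A : c0 ∈ A := by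
    apply hmax hB hle
    rw [Subgroup.mem_comap, hc0]
    exact Subgroup.mem_zpowers _
  apply hc1
  apply Subtype.ext
  rw [← hc0]
  exact ((QuotientGroup.eq_one_iff c0).2 hc0A).symm

theorem dvd_bound {p ν f m : ℕ} (hp : p.Prime) (h1 : f ∣ (p ^ m).totient) (h2 : ¬ p ^ ν ∣ f) :
    f ∣ p ^ ν * (p - 1) := by
  rcases Nat.eq_zero_or_pos m with rfl | hm
  · simp at h1; simp [h1]
  rw [Nat.totient_prime_pow hp hm] at h1
  have hf0 : f ≠ 0 := by rintro rfl; simp at h2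
  obtain ⟨e, f', hf', rfl⟩ := Nat.exists_eq_pow_mul_and_not_dvd hf0 p hp.ne_one
  have he : e < ν := by
    by_contra h
    push Not at h
    exact h2 ((pow_dvd_pow p h).trans (dvd_mul_right _ _))
  apply Nat.mul_dvd_mul (pow_dvd_pow p he.le)
  have hcop : Nat.Coprime f' (p ^ (m-1)) := (((Nat.Prime.coprime_iff_not_dvd hp).2 hf').symm).pow_right _
  exact hcop.dvd_of_dvd_mul_left ((dvd_mul_left _ _).trans h1)

theorem root_bound (p : ℕ) (hp : p.Prime) (k : Type*) [Field k]
    (hk : Nonempty (k ≃+* ℚ) ∨ (Finite k ∧ ringChar k ≠ p)) (ν : ℕ) :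
    ∃ C : ℕ, ∀ (K : Type*) [Field K] [Algebra k K] [FiniteDimensional k K] (ζ : K) (m : ℕ),
      IsPrimitiveRoot ζ (p ^ m) → ¬ p ^ ν ∣ Module.finrank k K → p ^ m ≤ C := by
  rcases hk with ⟨⟨e⟩⟩ | ⟨hfin, hchar⟩
  · refine ⟨p ^ (ν + 1), ?_⟩
    intro K _ _ _ ζ m hζ hn
    apply Nat.pow_le_pow_right hp.pos
    by_contra hm
    push Not at hm
    apply hn
    have : CharZero k := charZero_of_injective_ringHom (f := e.symm.toRingHom) e.symm.injective
    have : CharZero K := charZero_of_injective_algebraMap (algebraMap k K).injective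
    have hirr : Irreducible (Polynomial.cyclotomic (p ^ m) k) := by
      have h1 := Polynomial.cyclotomic.irreducible_rat (pow_pos hp.pos m)
      have h2 := (MulEquiv.irreducible_iff (Polynomial.mapEquiv e.symm)).2 h1
      simpa using h2
    have hmin := minpoly.eq_of_irreducible_of_monic hirr
      (x := ζ) (by
        have := hζ.isRoot_cyclotomic (pow_pos hp.pos m)
        rw [Polynomial.aeval_def, Polynomial.eval₂_eq_eval_map, Polynomial.map_cyclotomic]
        exact this) (Polynomial.cyclotomic.monic _ _)
    have hd := minpoly.degree_dvd (K := k) (x := ζ) (IsIntegral.of_finite k ζ)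
    rw [← hmin, Polynomial.natDegree_cyclotomic, Nat.totient_prime_pow hp (by omega)] at hd
    exact (pow_dvd_pow p (by omega)).trans ((dvd_mul_right _ _).trans hd)
  · have hcop : Nat.Coprime (Nat.card k) p := by
      rw [Nat.coprime_comm, hp.coprime_iff_not_dvd]
      intro h
      apply hchar
      have := Fintype.ofFinite k
      rw [Nat.card_eq_fintype_card] at h
      obtain ⟨n, hn, hc⟩ := FiniteField.card k (ringChar k)
      rw [hc] at h
      exact ((Nat.prime_dvd_prime_iff_eq hp hn).1 (hp.dvd_of_dvd_pow h)).symm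
    have hq : 1 < Nat.card k := Finite.one_lt_card
    refine ⟨Nat.card k ^ (p ^ ν * (p - 1)), ?_⟩
    intro K _ _ _ ζ m hζ hn
    have : Finite K := Module.finite_of_finite k
    have := Fintype.ofFinite K
    have h1 : p ^ m ∣ Nat.card k ^ Module.finrank k K - 1 := by
      rw [← Module.natCard_eq_pow_finrank, Nat.card_eq_fintype_card]
      apply hζ.dvd_of_pow_eq_one
      exact FiniteField.pow_card_sub_one_eq_one ζ (hζ.ne_zero (pow_ne_zero _ hp.ne_zero))
    have hpm : NeZero (p ^ m) := ⟨pow_ne_zero _ hp.ne_zero⟩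
    have hcop' : Nat.Coprime (Nat.card k) (p ^ m) := hcop.pow_right m
    let u := ZMod.unitOfCoprime _ hcop'
    have hu : ∀ f : ℕ, u ^ f = 1 ↔ p ^ m ∣ Nat.card k ^ f - 1 := by
      intro f
      rw [← Nat.modEq_iff_dvd' (Nat.one_le_pow _ _ (by omega)), Units.ext_iff]
      simp only [u, Units.val_pow_eq_pow_val, ZMod.coe_unitOfCoprime, Units.val_one]
      rw [← Nat.cast_pow, ← Nat.cast_one, ZMod.natCast_eq_natCast_iff]
      exact Nat.ModEq.comm
    have h2 : orderOf u ∣ Module.finrank k K := orderOf_dvd_of_pow_eq_one ((hu _).2 h1)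
    have h3 : orderOf u ∣ (p ^ m).totient := by
      rw [← ZMod.card_units_eq_totient]; exact orderOf_dvd_card
    have h4 := dvd_bound hp h3 (fun h => hn (h.trans h2))
    have h5 := (hu _).1 (orderOf_dvd_iff_pow_eq_one.1 h4)
    have h6 : 1 < Nat.card k ^ (p ^ ν * (p - 1)) := Nat.one_lt_pow
      (Nat.mul_ne_zero (pow_ne_zero _ hp.ne_zero) (by have := hp.two_le; omega)) hq
    exact (Nat.le_of_dvd (by omega) h5).trans (Nat.sub_le _ _)


open scoped Pointwise in
theorem mem_psmul {k V : Type*} [Field k] [AddCommGroup V] [Module k V]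
    {Q : Subgroup (V ≃ₗ[k] V)} (g : Q) (S : Submodule k V) (v : V) :
    v ∈ g • S ↔ g⁻¹ • v ∈ S :=
  Set.mem_smul_set_iff_inv_smul_mem (a := (g : V ≃ₗ[k] V))

universe u v

open scoped Pointwise in
theorem clifford {k : Type u} {V : Type v} [Field k] [AddCommGroup V] [Module k V]
    [FiniteDimensional k V] [Nontrivial V] (Q : Subgroup (V ≃ₗ[k] V)) [Finite Q] (A : Subgroup Q)
    (hN : A.Normal) (hc : ∀ x ∈ A, ∀ y ∈ A, x * y = y * x) :
    ∃ U : Submodule k V, U ≠ ⊥ ∧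
      iSupIndep (fun W : MulAction.orbit Q U => (W : Submodule k V)) ∧
      (U = ⊤ → ∃ (K : Type v) (_ : Field K) (_ : Algebra k K) (_ : Module K V)
        (_ : IsScalarTower k K V) (_ : FiniteDimensional k K) (f : A →* K),
        Function.Injective f) := by
  classical
  let ι : Q → Module.End k V := fun a => ((a : V ≃ₗ[k] V) : V →ₗ[k] V)
  have ι_mul : ∀ a b, ι (a * b) = ι a * ι b := fun a b => rfl
  have ι_one : ι 1 = 1 := rfl
  let s : Set (Module.End k V) := ι '' (A : Set Q)
  have hs : ∀ a ∈ s, ∀ b ∈ s, a * b = b * a := by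
    rintro _ ⟨a, ha, rfl⟩ _ ⟨b, hb, rfl⟩
    rw [← ι_mul, ← ι_mul, hc a ha b hb]
  let K := Algebra.adjoin k s
  have hcomm : IsMulCommutative K := Algebra.isMulCommutative_adjoin k hs
  let _ : CommRing K := { (K.toRing : Ring K) with mul_comm := hcomm.is_comm.comm }
  have hfin : FiniteDimensional k K := inferInstanceAs (FiniteDimensional k (Subalgebra.toSubmodule K))
  have hart : IsArtinianRing K := IsArtinianRing.of_finite k K
  have hsmul : ∀ (x : K) (v : V), x • v = (x : Module.End k V) v := fun x v => rfl
  have hconj_mem : ∀ (g : Q) (x : Module.End k V), x ∈ K → ι g * x * ι g⁻¹ ∈ K := by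
    intro g x hx
    have hgi : ι g⁻¹ * ι g = 1 := by rw [← ι_mul, inv_mul_cancel, ι_one]
    have hgi' : ι g * ι g⁻¹ = 1 := by rw [← ι_mul, mul_inv_cancel, ι_one]
    induction hx using Algebra.adjoin_induction with
    | mem x hx =>
      obtain ⟨a, ha, rfl⟩ := hx
      rw [← ι_mul, ← ι_mul]
      exact Algebra.subset_adjoin ⟨_, hN.conj_mem a ha g, rfl⟩
    | algebraMap r =>
      rw [← Algebra.commutes, mul_assoc, hgi', mul_one]
      exact K.algebraMap_mem r
    | add x y _ _ hx hy => rw [mul_add, add_mul]; exact add_mem hx hy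
    | mul x y _ _ hx hy =>
      have : ι g * (x * y) * ι g⁻¹ = (ι g * x * ι g⁻¹) * (ι g * y * ι g⁻¹) := by
        calc _ = ι g * x * 1 * y * ι g⁻¹ := by simp [mul_assoc]
          _ = _ := by rw [← hgi]; simp only [mul_assoc]
      rw [this]; exact mul_mem hx hy
  let σ : Q → K →+* K := fun g =>
    { toFun := fun x => ⟨ι g * x * ι g⁻¹, hconj_mem g x x.2⟩
      map_one' := by
        apply Subtype.ext
        change ι g * 1 * ι g⁻¹ = 1
        rw [mul_one, ← ι_mul, mul_inv_cancel, ι_one]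
      map_zero' := by
        apply Subtype.ext
        change ι g * 0 * ι g⁻¹ = 0
        simp
      map_add' := by
        intro x y
        apply Subtype.ext
        change ι g * (x + y) * ι g⁻¹ = ι g * x * ι g⁻¹ + ι g * y * ι g⁻¹
        rw [mul_add, add_mul]
      map_mul' := by
        intro x y
        apply Subtype.ext
        change ι g * (x * y) * ι g⁻¹ = (ι g * x * ι g⁻¹) * (ι g * y * ι g⁻¹)
        have hgi : ι g⁻¹ * ι g = 1 := by rw [← ι_mul, inv_mul_cancel, ι_one]
        calc _ = ι g * x * 1 * y * ι g⁻¹ := by simp [mul_assoc]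
          _ = _ := by rw [← hgi]; simp only [mul_assoc] }
  have hσ : ∀ (g : Q) (x : K) (v : V), (σ g x) • v = g • (x • (g⁻¹ • v)) := fun g x v => rfl
  have hσσ : ∀ (g : Q) (x : K), σ g⁻¹ (σ g x) = x := by
    intro g x
    apply Subtype.ext
    apply LinearMap.ext
    intro v
    change (σ g⁻¹ (σ g x)) • v = x • v
    rw [hσ, hσ]; simp
  obtain ⟨P, hP⟩ := associatedPrimes.nonempty K V
  have hPp : P.IsPrime := hP.1
  obtain ⟨-, v0, hv0⟩ := isAssociatedPrime_iff.1 hP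
  let T : Ideal K → Submodule k V := fun I => (Submodule.torsionBySet K V I).restrictScalars k
  have memT : ∀ (I : Ideal K) (v : V), v ∈ T I ↔ ∀ x ∈ I, x • v = 0 := by
    intro I v
    simp only [T, Submodule.restrictScalars_mem, Submodule.mem_torsionBySet_iff]
    exact ⟨fun h x hx => h ⟨x, hx⟩, fun h x => h x x.2⟩
  have hT : ∀ (g : Q), g • T P = T (P.comap (σ g⁻¹)) := by
    intro g
    ext v
    rw [mem_psmul, memT, memT]
    constructor
    · intro h x hx
      have := h _ hx
      rw [hσ, smul_eq_zero_iff_eq] at this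
      simpa using this
    · intro h y hy
      have := h (σ g y) (by rw [Ideal.mem_comap, hσσ]; exact hy)
      rw [hσ, smul_eq_zero_iff_eq] at this
      exact this
  refine ⟨T P, ?_, ?_, ?_⟩
  · intro h
    have hv : v0 ∈ T P := by
      rw [memT]
      intro x hx
      rw [hv0, Submodule.mem_colon_singleton] at hx
      simpa using hx
    rw [h, Submodule.mem_bot] at hv
    apply hPp.ne_top
    rw [hv0, hv]
    ext x
    simp [Submodule.mem_colon_singleton]
  · have hch : ∀ W : MulAction.orbit Q (T P), ∃ I : Ideal K, I.IsMaximal ∧ (W : Submodule k V) = T I := by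
      rintro ⟨_, g, rfl⟩
      refine ⟨P.comap (σ g⁻¹), ?_, hT g⟩
      have : (P.comap (σ g⁻¹)).IsPrime := inferInstance
      exact IsArtinianRing.isMaximal_of_isPrime _
    choose I hI hIT using hch
    have hinj : Function.Injective I := by
      intro W W' h
      apply Subtype.ext
      rw [hIT, hIT, h]
    intro W
    rw [Submodule.disjoint_def]
    have hle : (⨆ j, ⨆ (_ : j ≠ W), (j : Submodule k V)) ≤
        (⨆ j, ⨆ (_ : j ≠ W), Submodule.torsionBySet K V (I j)).restrictScalars k := by
      refine iSup₂_le fun j hj => ?_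
      rw [hIT j]
      intro v hv
      exact (le_iSup₂ (f := fun j (_ : j ≠ W) => Submodule.torsionBySet K V (I j)) j hj) hv
    have hind : iSupIndep (fun j => Submodule.torsionBySet K V (I j)) := by
      have : Finite (MulAction.orbit Q (T P)) := Set.finite_range _
      have : Fintype (MulAction.orbit Q (T P)) := Fintype.ofFinite _
      rw [iSupIndep_iff_supIndep_univ]
      apply Submodule.supIndep_torsionBySet_ideal
      intro i _ j _ hij
      exact (hI i).coprime_of_ne (hI j) (hinj.ne hij)
    intro v hv hv'
    have hv2 := hle hv'
    change v ∈ (W : Submodule k V) at hv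
    rw [hIT] at hv
    exact Submodule.disjoint_def.1 (hind W) v hv hv2
  · intro htop
    have hPbot : P = ⊥ := by
      rw [eq_bot_iff]
      intro x hx
      have : ∀ v : V, x • v = 0 := fun v => (memT P v).1 (htop ▸ Submodule.mem_top) x hx
      have : x = 0 := Subtype.ext (LinearMap.ext this)
      simp [this]
    have hdom : IsDomain K := by
      rw [hPbot] at hPp
      exact IsDomain.of_bot_isPrime K
    let F : Field K := (IsArtinianRing.isField_of_isDomain K).toField
    refine ⟨K, F, inferInstance, inferInstance, inferInstance, hfin,
      { toFun := fun a => ⟨ι a, Algebra.subset_adjoin ⟨a, a.2, rfl⟩⟩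
        map_one' := rfl
        map_mul' := fun a b => rfl }, ?_⟩
    intro a b h
    have h1 := congrArg Subtype.val h
    apply Subtype.ext
    apply Subtype.ext
    exact LinearEquiv.toLinearMap_injective h1


theorem card_le_of_selfcentralizing {Q : Type*} [Group Q] [Finite Q] (A : Subgroup Q)
    (hN : A.Normal) (h : ∀ x, (∀ a ∈ A, x * a = a * x) → x ∈ A) :
    Nat.card Q ≤ Nat.card A * (Nat.card A).factorial := by
  rw [← Subgroup.card_mul_index A]
  apply Nat.mul_le_mul_left
  have hker : (MulAut.conjNormal (H := A)).ker ≤ A := by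
    intro x hx
    apply h
    intro a ha
    have h1 := DFunLike.congr_fun (MonoidHom.mem_ker.1 hx) (⟨a, ha⟩ : A)
    have h2 := congrArg Subtype.val h1
    simp only [MulAut.conjNormal_apply, MulAut.one_apply] at h2
    exact mul_inv_eq_iff_eq_mul.1 h2
  have h1 : A.index ≤ (MulAut.conjNormal (H := A)).ker.index :=
    Nat.le_of_dvd (Nat.pos_of_ne_zero Subgroup.index_ne_zero_of_finite) (Subgroup.index_dvd_of_le hker)
  refine h1.trans ?_
  rw [Subgroup.index_ker, ← Nat.card_perm]
  refine (Nat.card_le_card_of_injective (Subtype.val) Subtype.val_injective).trans ?_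
  exact Nat.card_le_card_of_injective (MulAut.toPerm A) (fun x y hxy => by
    ext a; exact congrArg Subtype.val (DFunLike.congr_fun hxy a))

theorem card_le_factorial_index {Q : Type*} [Group Q] [Finite Q] (N : Subgroup Q)
    (h : N.normalCore = ⊥) : Nat.card Q ≤ N.index.factorial := by
  rw [Subgroup.normalCore_eq_ker] at h
  have hinj := (MonoidHom.ker_eq_bot_iff _).1 h
  have := Nat.card_le_card_of_injective _ hinj
  rwa [Nat.card_perm] at this

theorem finrank_of_equal {k V ι : Type*} [Field k] [AddCommGroup V] [Module k V]
    [FiniteDimensional k V] [Finite ι] (U : ι → Submodule k V) (h : iSupIndep U)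
    (htop : ⨆ i, U i = ⊤) (d : ℕ) (hd : ∀ i, Module.finrank k (U i) = d) :
    Module.finrank k V = Nat.card ι * d := by
  classical
  have := Fintype.ofFinite ι
  have hinternal := DirectSum.isInternal_submodule_of_iSupIndep_of_iSup_eq_top h htop
  have e := LinearEquiv.ofBijective (DirectSum.coeLinearMap U) hinternal
  rw [← e.finrank_eq, Module.finrank_directSum]
  simp [hd, Nat.card_eq_fintype_card]

open scoped Pointwise in
theorem group_bound (p : ℕ) (hp : p.Prime) (k : Type u) [Field k]
    (hk : Nonempty (k ≃+* ℚ) ∨ (Finite k ∧ ringChar k ≠ p)) (ν : ℕ) :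
    ∃ B : ℕ, ∀ (V : Type v) [AddCommGroup V] [Module k V] [FiniteDimensional k V] [Nontrivial V]
      (Q : Subgroup (V ≃ₗ[k] V)) [Finite Q], IsPGroup p Q →
      (∀ W : Submodule k V, (∀ g ∈ Q, ∀ w ∈ W, g w ∈ W) → W = ⊥ ∨ W = ⊤) →
      ¬ p ^ ν ∣ Module.finrank k V → Nat.card Q ≤ B := by
  have := Fact.mk hp
  induction ν with
  | zero => exact ⟨0, fun V _ _ _ _ Q _ _ _ h => absurd (by simp) h⟩
  | succ ν ih =>
    obtain ⟨B, hB⟩ := ih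
    obtain ⟨C, hC⟩ := root_bound.{u, v} p hp k hk (ν + 1)
    refine ⟨max (C * C.factorial) ((p ^ (ν + 1) * B).factorial), ?_⟩
    intro V _ _ _ _ Q _ hQ hirr hn
    obtain ⟨A, hAn, hAc, hAs⟩ := exists_selfcentralizing hp hQ
    obtain ⟨U, hU0, hind, hfield⟩ := clifford Q A hAn hAc
    have hirr' : ∀ W : Submodule k V, W ≠ ⊥ → (∀ g : Q, g • W ≤ W) → W = ⊤ := by
      intro W hW h
      refine (hirr W ?_).resolve_left hW
      intro g hg w hw
      apply h ⟨g, hg⟩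
      rw [mem_psmul]
      change (⟨g, hg⟩ : Q)⁻¹ • ((⟨g, hg⟩ : Q) • w) ∈ W
      rwa [inv_smul_smul]
    have hspan : ∀ W : Submodule k V, W ≠ ⊥ → ⨆ g : Q, g • W = ⊤ := by
      intro W hW
      apply hirr'
      · intro h
        apply hW
        rw [eq_bot_iff, ← h]
        simpa using le_iSup (fun g : Q => g • W) 1
      · intro g
        change Submodule.map ((g : V ≃ₗ[k] V) : V →ₗ[k] V) (⨆ g : Q, g • W) ≤ _
        rw [Submodule.map_iSup]
        refine iSup_le fun h => ?_
        refine le_trans (le_of_eq ?_) (le_iSup (fun g : Q => g • W) (g * h))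
        exact (mul_smul g h W).symm
    by_cases hst : ∀ g : Q, g • U = U
    · apply le_max_of_le_left
      have hUt : U = ⊤ := hirr' U hU0 fun g => (hst g).le
      obtain ⟨K, _, _, _, _, _, f, hf⟩ := hfield hUt
      have hcyc : IsCyclic A := isCyclic_of_injective_ringHom f hf
      obtain ⟨a, ha⟩ := hcyc.exists_generator
      obtain ⟨m, hm⟩ := (IsPGroup.iff_card.1 (hQ.to_subgroup A))
      have hord : orderOf (f a) = p ^ m := by
        rw [orderOf_injective f hf, orderOf_eq_card_of_forall_mem_zpowers ha, hm]
      have hAC : Nat.card A ≤ C := by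
        rw [hm]
        refine hC K (f a) m ?_ ?_
        · rw [← hord]; exact IsPrimitiveRoot.orderOf _
        · intro h
          apply hn
          rw [← Module.finrank_mul_finrank k K V]
          exact h.trans (dvd_mul_right _ _)
      exact (card_le_of_selfcentralizing A hAn hAs).trans
        (Nat.mul_le_mul hAC (Nat.factorial_le hAC))
    · apply le_max_of_le_right
      push Not at hst
      let O := MulAction.orbit Q U
      have hOfin : Finite O := Set.finite_range _
      let H := MulAction.stabilizer Q U
      have hcardO : Nat.card O = H.index := (Nat.card_congr (MulAction.orbitEquivQuotientStabilizer Q U))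
      have htop : ⨆ W : O, (W : Submodule k V) = ⊤ := by
        rw [eq_top_iff, ← hspan U hU0]
        exact iSup_le fun g => le_iSup (fun W : O => (W : Submodule k V)) ⟨g • U, g, rfl⟩
      have hdim : Module.finrank k V = H.index * Module.finrank k U := by
        rw [← hcardO]
        apply finrank_of_equal _ hind htop
        rintro ⟨_, g, rfl⟩
        exact (LinearEquiv.submoduleMap (g : V ≃ₗ[k] V) U).finrank_eq.symm
      obtain ⟨b, hb⟩ := hQ.index H
      have hHne : H ≠ ⊤ := by
        intro h
        obtain ⟨g, hg⟩ := hst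
        apply hg
        have : g ∈ H := h ▸ Subgroup.mem_top g
        exact this
      have hb1 : b ≠ 0 := by
        rintro rfl
        exact hHne (Subgroup.index_eq_one.1 (by simpa using hb))
      have hUn : ¬ p ^ ν ∣ Module.finrank k U := by
        intro h
        apply hn
        rw [hdim, hb, pow_succ, mul_comm]
        exact Nat.mul_dvd_mul (dvd_pow_self p hb1) h
      have hbν : b < ν + 1 := by
        by_contra h
        apply hn
        rw [hdim, hb]
        exact (pow_dvd_pow p (by omega)).trans (dvd_mul_right _ _)
      have hHU : ∀ (h : H) (u : V), u ∈ U → ((h : Q) : V ≃ₗ[k] V) u ∈ U := by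
        intro h u hu
        have h1 : (h : Q) • U = U := h.2
        rw [← h1, mem_psmul]
        change (h : Q)⁻¹ • ((h : Q) • u) ∈ U
        rwa [inv_smul_smul]
      let r0 : H →* Module.End k U :=
        { toFun := fun h => (((h : Q) : V ≃ₗ[k] V) : V →ₗ[k] V).restrict (hHU h)
          map_one' := rfl
          map_mul' := fun _ _ => rfl }
      let r : H →* (U ≃ₗ[k] U) :=
        (LinearMap.GeneralLinearGroup.generalLinearEquiv k U).toMonoidHom.comp r0.toHomUnits
      have hr : ∀ (h : H) (u : U), ((r h u : U) : V) = ((h : Q) : V ≃ₗ[k] V) u := fun _ _ => rfl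
      have hUnt : Nontrivial U := Submodule.nontrivial_iff_ne_bot.2 hU0
      have hpr : IsPGroup p r.range := (hQ.to_subgroup H).of_surjective r.rangeRestrict
        r.rangeRestrict_surjective
      have hcard : Nat.card r.range ≤ B := by
        have : Finite r.range := Finite.of_surjective _ r.rangeRestrict_surjective
        refine hB U r.range hpr ?_ hUn
        intro W hW
        by_cases hW0 : W = ⊥
        · exact Or.inl hW0
        right
        let W' : Submodule k V := W.map U.subtype
        have hW'0 : W' ≠ ⊥ := by
          intro h
          apply hW0
          exact Submodule.map_injective_of_injective U.injective_subtype (h.trans (Submodule.map_bot _).symm)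
        have hW'U : W' ≤ U := Submodule.map_subtype_le _ _
        have hle : (⊤ : Submodule k V) ≤ W' ⊔ ⨆ j : O, ⨆ (_ : j ≠ ⟨U, MulAction.mem_orbit_self U⟩),
            (j : Submodule k V) := by
          rw [← hspan W' hW'0]
          refine iSup_le fun g => ?_
          by_cases hg : g • U = U
          · refine le_trans ?_ le_sup_left
            intro v hv
            rw [mem_psmul] at hv
            obtain ⟨w, hw, hwv⟩ := hv
            have hgH : g ∈ H := hg
            refine ⟨r ⟨g, hgH⟩ w, hW _ ⟨_, rfl⟩ w hw, ?_⟩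
            change (g : V ≃ₗ[k] V) (w : V) = v
            have : (w : V) = g⁻¹ • v := hwv
            rw [this]
            exact smul_inv_smul g v
          · refine le_trans ?_ le_sup_right
            refine le_trans ?_ (le_iSup₂ (f := fun (j : O) (_ : j ≠ ⟨U, MulAction.mem_orbit_self U⟩) =>
              (j : Submodule k V)) ⟨g • U, g, rfl⟩ (fun h => hg (congrArg Subtype.val h)))
            intro v hv
            rw [mem_psmul] at hv ⊢
            exact hW'U hv
        rw [eq_top_iff]
        intro u _
        obtain ⟨w, hw, z, hz, hwz⟩ := Submodule.mem_sup.1 (hle (Submodule.mem_top : (u : V) ∈ ⊤))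
        have hzU : z ∈ U := by
          have : z = u - w := by rw [← hwz]; abel
          rw [this]
          exact U.sub_mem u.2 (hW'U hw)
        have hz0 := Submodule.disjoint_def.1 (hind ⟨U, MulAction.mem_orbit_self U⟩) z hzU hz
        rw [hz0, add_zero] at hwz
        obtain ⟨w1, hw1, hw1'⟩ := hw
        have : w1 = u := Subtype.ext (hw1'.trans hwz)
        rwa [← this]
      let N : Subgroup Q := r.ker.map H.subtype
      have hNidx : N.index ≤ p ^ (ν + 1) * B := by
        rw [Subgroup.index_map_subtype, mul_comm, Subgroup.index_ker, hb]
        exact Nat.mul_le_mul (Nat.pow_le_pow_right hp.pos hbν.le) hcard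
      refine (card_le_factorial_index N ?_).trans (Nat.factorial_le hNidx)
      rw [eq_bot_iff]
      intro g hg
      rw [Subgroup.mem_bot]
      have hfix : (⊤ : Submodule k V) ≤ LinearMap.eqLocus ((g : V ≃ₗ[k] V) : V →ₗ[k] V) LinearMap.id := by
        rw [← hspan U hU0]
        refine iSup_le fun h => ?_
        intro v hv
        rw [mem_psmul] at hv
        obtain ⟨y, hy, hyg⟩ := hg h⁻¹
        have h1 := hr y ⟨_, hv⟩
        rw [MonoidHom.mem_ker.1 hy] at h1
        have h2 : h⁻¹ • v = (h⁻¹ * g * h⁻¹⁻¹) • h⁻¹ • v := by rw [← hyg]; exact h1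
        change g • v = v
        rw [inv_inv, mul_smul, mul_smul, smul_inv_smul] at h2
        exact (smul_left_cancel _ h2).symm
      apply Subtype.ext
      apply LinearEquiv.ext
      intro v
      exact hfix Submodule.mem_top


theorem exists_open_normal {G : Type*} [Group G] [TopologicalSpace G] [IsTopologicalGroup G]
    (hfg : ∃ S : Finset G, Dense ((Subgroup.closure (S : Set G) : Subgroup G) : Set G)) (B : ℕ) :
    ∃ N : Subgroup G, N.Normal ∧ IsOpen (N : Set G) ∧ ∀ M : Subgroup G, M.Normal →
      IsOpen (M : Set G) → M.index ≠ 0 → M.index ≤ B → N ≤ M := by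
  obtain ⟨S, hS⟩ := hfg
  let T := Σ m : Fin (B + 1), {f : G →* Equiv.Perm (Fin m) // IsOpen (f.ker : Set G)}
  have hfin : ∀ m : ℕ, Finite {f : G →* Equiv.Perm (Fin m) // IsOpen (f.ker : Set G)} := by
    intro m
    refine Finite.of_injective
      (fun f => (fun s : S => f.1 s : S → Equiv.Perm (Fin m))) ?_
    rintro ⟨f, hf⟩ ⟨f', hf'⟩ h
    apply Subtype.ext
    have hle : Subgroup.closure (S : Set G) ≤ f.eqLocus f' := by
      rw [Subgroup.closure_le]
      intro s hs
      exact congrFun h ⟨s, hs⟩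
    have hopen : IsOpen ((f.eqLocus f' : Subgroup G) : Set G) := by
      refine Subgroup.isOpen_mono (H₁ := f.ker ⊓ f'.ker) ?_ (hf.inter hf')
      intro x hx
      change f x = f' x
      rw [MonoidHom.mem_ker.1 hx.1, MonoidHom.mem_ker.1 hx.2]
    have hclosed := Subgroup.isClosed_of_isOpen _ hopen
    have huniv : ((f.eqLocus f' : Subgroup G) : Set G) = Set.univ := by
      rw [← hclosed.closure_eq]
      exact (hS.mono hle).closure_eq
    ext1 x
    have : x ∈ ((f.eqLocus f' : Subgroup G) : Set G) := huniv ▸ Set.mem_univ x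
    exact this
  have hT : Finite T := by
    have := fun m : Fin (B + 1) => hfin m
    infer_instance
  refine ⟨⨅ t : T, t.2.1.ker, ?_, ?_, ?_⟩
  · exact Subgroup.normal_iInf_normal fun t => inferInstance
  · rw [Subgroup.coe_iInf]
    exact isOpen_iInter_of_finite fun t => t.2.2
  · intro M hM hMo hM0 hMB
    have : M.FiniteIndex := ⟨hM0⟩
    let e : G ⧸ M ≃ Fin M.index := Finite.equivFin (G ⧸ M)
    let f : G →* Equiv.Perm (Fin M.index) :=
      (e.permCongrHom.toMonoidHom).comp (MulAction.toPermHom G (G ⧸ M))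
    have hker : f.ker = M := by
      ext x
      rw [MonoidHom.mem_ker]
      change e.permCongrHom (MulAction.toPermHom G (G ⧸ M) x) = 1 ↔ _
      rw [EmbeddingLike.map_eq_one_iff, ← MonoidHom.mem_ker, ← Subgroup.normalCore_eq_ker,
        Subgroup.normalCore_eq_self]
    let t : T := ⟨⟨M.index, by omega⟩, f, by rw [hker]; exact hMo⟩
    refine (iInf_le (fun t : T => t.2.1.ker) t).trans ?_
    exact hker.le

/-- The linear representation attached to a homomorphism to `GL_n`. -/
noncomputable def repOfGL {F k : Type*} [Group F] [Field k] {n : ℕ} (ρ : F →* GL (Fin n) k) :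
    Representation k F (Fin n → k) :=
  ((Matrix.toLinAlgEquiv' (R := k) (n := Fin n)).toRingEquiv.toMonoidHom).comp
    ((Units.coeHom _).comp ρ)

theorem repOfGL_apply {F k : Type*} [Group F] [Field k] {n : ℕ} (ρ : F →* GL (Fin n) k)
    (g : F) (v : Fin n → k) : repOfGL ρ g v = (ρ g : Matrix (Fin n) (Fin n) k) *ᵥ v := rfl

theorem simple_repOfGL {F k : Type*} [Group F] [Field k] {n : ℕ} (ρ : F →* GL (Fin n) k)
    (h : ρ.IsIrreducibleGL) : IsSimpleModule (MonoidAlgebra k F) (repOfGL ρ).asModule := by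
  rw [← Representation.irreducible_iff_isSimpleModule_asModule]
  have : Nonempty (Fin n) := ⟨⟨0, h.1⟩⟩
  refine { exists_pair_ne := ⟨⊥, ⊤, ?_⟩, eq_bot_or_eq_top := ?_ }
  · intro h
    have := congrArg Subrepresentation.toSubmodule h
    exact bot_ne_top this
  · intro a
    have hinv : ∀ g : F, a.toSubmodule.map ((ρ g : Matrix (Fin n) (Fin n) k).mulVecLin)
        ≤ a.toSubmodule := by
      rintro g _ ⟨w, hw, rfl⟩
      exact a.apply_mem_toSubmodule g hw
    rcases h.2 a.toSubmodule hinv with h1 | h1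
    · left; exact Subrepresentation.toSubmodule_injective h1
    · right; exact Subrepresentation.toSubmodule_injective h1

theorem finite_irreps {F : Type v} {k : Type u} [Group F] [Finite F] [Field k]
    [NeZero (Nat.card F : k)] {T : Type*} (n : T → ℕ) (ρ : ∀ t, F →* GL (Fin (n t)) k)
    (hρ : ∀ t, (ρ t).IsIrreducibleGL) :
    ∃ (X : Type (max u v)) (_ : Finite X) (c : T → X), ∀ t t', c t = c t' →
      ∃ e : (Fin (n t) → k) ≃ₗ[k] (Fin (n t') → k), ∀ (g : F) (v : Fin (n t) → k),
        e ((ρ t g : Matrix _ _ k) *ᵥ v) = (ρ t' g : Matrix _ _ k) *ᵥ (e v) := by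
  let R := MonoidAlgebra k F
  have hch : ∀ t, ∃ I : Ideal R, Nonempty ((repOfGL (ρ t)).asModule ≃ₗ[R] I) := fun t => by
    have := simple_repOfGL _ (hρ t)
    exact IsSemisimpleRing.exists_linearEquiv_ideal_of_isSimpleModule R _
  choose I hI using hch
  have hs : ∀ t, IsSimpleModule R (I t) := fun t => by
    have := simple_repOfGL _ (hρ t)
    exact IsSimpleModule.congr (hI t).some.symm
  refine ⟨isotypicComponents R R, inferInstance,
    fun t => ⟨isotypicComponent R R (I t), I t, hs t, rfl⟩, ?_⟩
  intro t t' h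
  have h1 : isotypicComponent R R (I t) = isotypicComponent R R (I t') := congrArg Subtype.val h
  have := hs t
  have := hs t'
  have h2 := isIsotypicOfType_submodule_iff.1 (IsIsotypicOfType.isotypicComponent R R (I t'))
    (I t) (h1 ▸ Submodule.le_isotypicComponent (I t))
  obtain ⟨e0⟩ := h2
  let e : (repOfGL (ρ t)).asModule ≃ₗ[R] (repOfGL (ρ t')).asModule :=
    (hI t).some.trans (e0.trans (hI t').some.symm)
  refine ⟨(repOfGL (ρ t)).asModuleEquiv.symm.trans ((e.restrictScalars k).trans
    (repOfGL (ρ t')).asModuleEquiv), ?_⟩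
  intro g v
  rw [← repOfGL_apply, ← repOfGL_apply]
  simp only [LinearEquiv.trans_apply]
  rw [Representation.asModuleEquiv_symm_map_rho, LinearEquiv.restrictScalars_apply, map_smul,
    Representation.asModuleEquiv_map_smul, Representation.asAlgebraHom_of]
  rfl


/-- Let `G` be a topologically finitely generated pro-`p` group and `k` either `ℚ` or a
finite field of characteristic `≠ p`.  For every `ν`, there are, up to equivalence, only
finitely many irreducible representations of `G` over `k` with open kernel whose
dimension is not divisible by `p^ν`. -/
theorem finitely_many_irreducible_reps_of_pro_p
    (p : ℕ) (hp : p.Prime)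
    (G : Type*) [Group G] [TopologicalSpace G] [IsTopologicalGroup G]
    [CompactSpace G] [T2Space G] [TotallyDisconnectedSpace G]
    (hpro : ∀ N : Subgroup G, N.Normal → IsOpen (N : Set G) → ∃ t : ℕ, N.index = p ^ t)
    (hfg : ∃ S : Finset G, Dense ((Subgroup.closure (S : Set G) : Subgroup G) : Set G))
    (k : Type*) [Field k]
    (hk : Nonempty (k ≃+* ℚ) ∨ (Finite k ∧ ringChar k ≠ p))
    (ν : ℕ) :
    ∃ (r : ℕ) (ns : Fin r → ℕ) (ρs : (i : Fin r) → (G →* GL (Fin (ns i)) k)),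
      (∀ i, (ρs i).IsIrreducibleGL ∧ IsOpen ((ρs i).ker : Set G)) ∧
      ∀ (n : ℕ) (ρ : G →* GL (Fin n) k), ρ.IsIrreducibleGL →
        IsOpen (ρ.ker : Set G) → ¬ (p ^ ν ∣ n) →
        ∃ i : Fin r, ns i = n ∧
          ∃ (g : Matrix (Fin n) (Fin (ns i)) k) (g' : Matrix (Fin (ns i)) (Fin n) k),
            g * g' = 1 ∧ g' * g = 1 ∧
            ∀ x : G, (ρ x : Matrix (Fin n) (Fin n) k) * g =
              g * (ρs i x : Matrix (Fin (ns i)) (Fin (ns i)) k) := by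
  obtain ⟨B, hB⟩ := group_bound p hp k hk ν
  obtain ⟨N, hNn, hNo, hN⟩ := exists_open_normal hfg B
  obtain ⟨t, ht⟩ := hpro N hNn hNo
  have hpk : (p : k) ≠ 0 := by
    rcases hk with ⟨⟨e⟩⟩ | ⟨_, hchar⟩
    · have : CharZero k := charZero_of_injective_ringHom (f := e.symm.toRingHom) e.symm.injective
      exact_mod_cast hp.ne_zero
    · intro h
      rcases (Nat.dvd_prime hp).1 (ringChar.dvd h) with h1 | h1
      · exact CharP.ringChar_ne_one h1
      · exact hchar h1
  have hcard : Nat.card (G ⧸ N) = p ^ t := ht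
  have hfin : Finite (G ⧸ N) := Nat.finite_of_card_ne_zero (by rw [hcard]; exact pow_ne_zero _ hp.ne_zero)
  have hne : NeZero (Nat.card (G ⧸ N) : k) := ⟨by rw [hcard]; push_cast; exact pow_ne_zero _ hpk⟩
  have hker : ∀ (n : ℕ) (ρ : G →* GL (Fin n) k), ρ.IsIrreducibleGL →
      IsOpen (ρ.ker : Set G) → ¬ (p ^ ν ∣ n) → N ≤ ρ.ker := by
    intro n ρ hρ ho hn
    obtain ⟨s, hs⟩ := hpro ρ.ker inferInstance ho
    have hs0 : ρ.ker.index ≠ 0 := by rw [hs]; exact pow_ne_zero _ hp.ne_zero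
    refine hN ρ.ker inferInstance ho hs0 ?_
    let φ : GL (Fin n) k →* ((Fin n → k) ≃ₗ[k] (Fin n → k)) :=
      (LinearMap.GeneralLinearGroup.generalLinearEquiv k (Fin n → k)).toMonoidHom.comp
        (Matrix.GeneralLinearGroup.toLin (n := Fin n) (R := k)).toMonoidHom
    have hφ : Function.Injective φ := (LinearMap.GeneralLinearGroup.generalLinearEquiv k
      (Fin n → k)).injective.comp (Matrix.GeneralLinearGroup.toLin (n := Fin n) (R := k)).injective
    let ψ := φ.comp ρ
    have hψ : ∀ g v, ψ g v = (ρ g : Matrix (Fin n) (Fin n) k) *ᵥ v := fun g v => rfl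
    have hkerψ : ψ.ker = ρ.ker := by
      ext x
      simp only [MonoidHom.mem_ker, ψ, MonoidHom.comp_apply]
      exact map_eq_one_iff φ hφ
    have hcr : Nat.card ψ.range = p ^ s := by rw [← Subgroup.index_ker, hkerψ, hs]
    have : Nonempty (Fin n) := ⟨⟨0, hρ.1⟩⟩
    have : Finite ψ.range := Nat.finite_of_card_ne_zero (by rw [hcr]; exact pow_ne_zero _ hp.ne_zero)
    have hfinal := hB (Fin n → k) ψ.range (IsPGroup.of_card hcr) ?_ (by simpa using hn)
    · rw [← hkerψ, Subgroup.index_ker]; exact hfinal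
    · intro W hW
      apply hρ.2
      rintro g _ ⟨w, hw, rfl⟩
      exact hW (ψ g) ⟨g, rfl⟩ w hw
  let T := Σ n : ℕ, {ρ : G →* GL (Fin n) k // ρ.IsIrreducibleGL ∧ IsOpen (ρ.ker : Set G) ∧
    ¬ (p ^ ν ∣ n)}
  let ρ' : ∀ t : T, (G ⧸ N) →* GL (Fin t.1) k := fun t =>
    QuotientGroup.lift N t.2.1 (hker t.1 t.2.1 t.2.2.1 t.2.2.2.1 t.2.2.2.2)
  obtain ⟨X, _, c, hc⟩ := finite_irreps (F := G ⧸ N) (fun t : T => t.1) ρ' (by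
    intro t
    refine ⟨t.2.2.1.1, fun W hW => t.2.2.1.2 W fun g => hW (QuotientGroup.mk g)⟩)
  let E : Set.range c ≃ Fin (Nat.card (Set.range c)) := Finite.equivFin _
  let τ : Fin (Nat.card (Set.range c)) → T := fun i => (E.symm i).2.choose
  have hτ : ∀ i, c (τ i) = (E.symm i).1 := fun i => (E.symm i).2.choose_spec
  refine ⟨Nat.card (Set.range c), fun i => (τ i).1, fun i => (τ i).2.1,
    fun i => ⟨(τ i).2.2.1, (τ i).2.2.2.1⟩, ?_⟩
  intro n ρ hρ ho hn
  let t0 : T := ⟨n, ρ, hρ, ho, hn⟩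
  refine ⟨E ⟨c t0, t0, rfl⟩, ?_⟩
  generalize hi : E ⟨c t0, t0, rfl⟩ = i
  have hci : c (τ i) = c t0 := by rw [hτ, ← hi, Equiv.symm_apply_apply]
  obtain ⟨e, he⟩ := hc _ _ hci
  refine ⟨by simpa using e.finrank_eq, LinearMap.toMatrix' e.toLinearMap,
    LinearMap.toMatrix' e.symm.toLinearMap, ?_, ?_, ?_⟩
  · rw [← LinearMap.toMatrix'_comp]; simp
  · rw [← LinearMap.toMatrix'_comp]; simp
  · intro x
    apply Matrix.toLin'.injective
    rw [Matrix.toLin'_mul, Matrix.toLin'_mul, Matrix.toLin'_toMatrix']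
    apply LinearMap.ext
    intro v
    exact (he (QuotientGroup.mk x) v).symm
end

section
/- Let p be a prime, N ≥ 1, and let B ∈ M_N(ℚ_p) be a matrix all of whose entries have p-adic absolute value at most p^{−1} (i.e. all entries lie in pℤ_p). Then the series log(1+B) := Σ_{j=1}^∞ (−1)^{j−1} B^j / j converges in M_N(ℚ_p), and the sequence p^{−n}((1+B)^{p^n} − 1) converges to log(1+B) as n → ∞. -/
open Filter

theorem aux_entry_pow (p : ℕ) [Fact p.Prime] (N : ℕ)
    (B : Matrix (Fin N) (Fin N) ℚ_[p])
    (hB : ∀ i j, ‖B i j‖ ≤ (p : ℝ)⁻¹) (k : ℕ) :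
    ∀ i j, ‖(B ^ k) i j‖ ≤ ((p : ℝ)⁻¹) ^ k := by
  induction k with
  | zero =>
    intro i j
    by_cases h : i = j
    · subst h; simp
    · simp [Matrix.one_apply_ne h]
  | succ k ih =>
    intro i j
    rw [pow_succ, Matrix.mul_apply]
    apply IsUltrametricDist.norm_sum_le_of_forall_le_of_nonneg (by positivity)
    intro l _
    rw [norm_mul, pow_succ]
    exact mul_le_mul (ih i l) (hB l j) (norm_nonneg _) (by positivity)

theorem aux_norm_inv (p : ℕ) [Fact p.Prime] (m : ℕ) (hm : m ≠ 0) :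
    ‖(m : ℚ_[p])‖⁻¹ ≤ (m : ℝ) := by
  have h0 : (m : ℚ_[p]) ≠ 0 := by exact_mod_cast hm
  rw [Padic.norm_eq_zpow_neg_valuation h0, Padic.valuation_natCast, zpow_neg, inv_inv,
    zpow_natCast]
  exact_mod_cast Nat.le_of_dvd (Nat.pos_of_ne_zero hm) pow_padicValNat_dvd

theorem aux_norm_nat (p : ℕ) [Fact p.Prime] (m : ℕ) : ‖(m : ℚ_[p])‖ ≤ 1 := by
  exact_mod_cast Padic.norm_int_le_one (p := p) (m : ℤ)

theorem aux_choose (p : ℕ) [Fact p.Prime] (n j : ℕ) :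
    ((p ^ n).choose (j + 1) : ℚ_[p])
      = (p : ℚ_[p]) ^ n * (((p ^ n - 1).choose j : ℚ_[p]) / ((j + 1 : ℕ) : ℚ_[p])) := by
  have hp : 0 < p ^ n := pow_pos (Fact.out : p.Prime).pos n
  have h := Nat.add_one_mul_choose_eq (p ^ n - 1) j
  rw [Nat.sub_add_cancel hp] at h
  have h0 : ((j + 1 : ℕ) : ℚ_[p]) ≠ 0 := by exact_mod_cast Nat.succ_ne_zero j
  have h' : (p : ℚ_[p]) ^ n * ((p ^ n - 1).choose j : ℚ_[p])
      = ((p ^ n).choose (j + 1) : ℚ_[p]) * ((j + 1 : ℕ) : ℚ_[p]) := by exact_mod_cast h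
  rw [← mul_div_assoc, eq_div_iff h0, h']

theorem aux_p_pow (p : ℕ) [Fact p.Prime] :
    Tendsto (fun n : ℕ => (p : ℚ_[p]) ^ n) atTop (nhds 0) :=
  tendsto_pow_atTop_nhds_zero_of_norm_lt_one Padic.norm_p_lt_one

theorem aux_choose_zero (p : ℕ) [Fact p.Prime] (j : ℕ) :
    Tendsto (fun n : ℕ => ((p ^ n).choose (j + 1) : ℚ_[p])) atTop (nhds 0) := by
  simp_rw [aux_choose]
  rw [tendsto_zero_iff_norm_tendsto_zero]
  have h := (aux_p_pow p).norm.mul_const (‖((j + 1 : ℕ) : ℚ_[p])‖⁻¹)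
  rw [norm_zero, zero_mul] at h
  refine squeeze_zero (fun _ => norm_nonneg _) (fun n => ?_) h
  rw [norm_mul, norm_div, div_eq_mul_inv]
  apply mul_le_mul_of_nonneg_left _ (norm_nonneg _)
  exact mul_le_of_le_one_left (by positivity) (aux_norm_nat p _)

theorem aux_choose_lim (p : ℕ) [Fact p.Prime] (j : ℕ) :
    Tendsto (fun n : ℕ => ((p ^ n - 1).choose j : ℚ_[p])) atTop (nhds ((-1) ^ j)) := by
  induction j with
  | zero => simp
  | succ j ih =>
    have h := (aux_choose_zero p j).sub ih
    rw [zero_sub] at h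
    rw [pow_succ, mul_neg_one]
    refine h.congr fun n => ?_
    have hp : 0 < p ^ n := pow_pos (Fact.out : p.Prime).pos n
    have h2 := Nat.choose_succ_succ' (p ^ n - 1) j
    rw [Nat.sub_add_cancel hp] at h2
    rw [h2]; push_cast; ring

/-- For a matrix `B` over `ℚ_p` with entries in `pℤ_p`, the series
`log(1+B) = Σ_{j≥1} (-1)^{j-1} B^j / j` converges, and
`p^{-n}((1+B)^{p^n} - 1)` converges to `log(1+B)` as `n → ∞`. -/
theorem padic_matrix_log_limit (p : ℕ) [Fact p.Prime] (N : ℕ) (hN : 1 ≤ N)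
    (B : Matrix (Fin N) (Fin N) ℚ_[p])
    (hB : ∀ i j, ‖B i j‖ ≤ (p : ℝ)⁻¹) :
    ∃ L : Matrix (Fin N) (Fin N) ℚ_[p],
      Tendsto (fun m : ℕ => ∑ j ∈ Finset.Icc 1 m,
          ((-1 : ℚ_[p]) ^ (j - 1) / (j : ℚ_[p])) • B ^ j) atTop (nhds L) ∧
      Tendsto (fun n => ((p : ℚ_[p]) ^ n)⁻¹ • ((1 + B) ^ (p ^ n) - 1)) atTop (nhds L) := by
  have hp1 : (1 : ℝ) < p := by exact_mod_cast (Fact.out : p.Prime).one_lt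
  have hsum : Summable (fun j : ℕ => ((j + 1 : ℕ) : ℝ) * ((p : ℝ)⁻¹) ^ (j + 1)) := by
    have h := summable_pow_mul_geometric_of_norm_lt_one (R := ℝ) 1 (r := (p : ℝ)⁻¹)
      (by rw [Real.norm_of_nonneg (by positivity)]; exact inv_lt_one_of_one_lt₀ hp1)
    simp only [pow_one] at h
    exact (summable_nat_add_iff (f := fun j : ℕ => (j : ℝ) * ((p : ℝ)⁻¹) ^ j) 1).mpr h
  have key : ∀ (c : ℚ_[p]) (_ : ‖c‖ ≤ 1) (j : ℕ) (a b : Fin N),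
      ‖c / ((j + 1 : ℕ) : ℚ_[p]) * (B ^ (j + 1)) a b‖
        ≤ ((j + 1 : ℕ) : ℝ) * ((p : ℝ)⁻¹) ^ (j + 1) := by
    intro c hc j a b
    rw [norm_mul, norm_div, div_eq_mul_inv]
    apply mul_le_mul _ (aux_entry_pow p N B hB _ a b) (norm_nonneg _) (by positivity)
    exact (mul_le_of_le_one_left (by positivity) hc).trans (aux_norm_inv p _ (Nat.succ_ne_zero j))
  refine ⟨fun a b => ∑' j : ℕ, (-1) ^ j / ((j + 1 : ℕ) : ℚ_[p]) * (B ^ (j + 1)) a b, ?_, ?_⟩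
  · refine tendsto_pi_nhds.mpr fun a => tendsto_pi_nhds.mpr fun b => ?_
    have hs : Summable (fun j : ℕ => (-1) ^ j / ((j + 1 : ℕ) : ℚ_[p]) * (B ^ (j + 1)) a b) :=
      Summable.of_norm_bounded hsum fun j => key _ (by simp) j a b
    refine hs.hasSum.tendsto_sum_nat.congr fun m => ?_
    rw [Matrix.sum_apply, ← Finset.Ico_add_one_right_eq_Icc, Finset.sum_Ico_eq_sum_range]
    simp [add_comm]
  · refine tendsto_pi_nhds.mpr fun a => tendsto_pi_nhds.mpr fun b => ?_
    have h := tendsto_tsum_of_dominated_convergence (𝓕 := atTop)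
      (f := fun (n j : ℕ) =>
        ((p ^ n - 1).choose j : ℚ_[p]) / ((j + 1 : ℕ) : ℚ_[p]) * (B ^ (j + 1)) a b)
      (g := fun j : ℕ => (-1) ^ j / ((j + 1 : ℕ) : ℚ_[p]) * (B ^ (j + 1)) a b) hsum
      (fun j => ((aux_choose_lim p j).div_const _).mul_const _)
      (Eventually.of_forall fun n j => key _ (aux_norm_nat p _) j a b)
    refine h.congr fun n => ?_
    have hpn : (p : ℚ_[p]) ^ n ≠ 0 :=
      pow_ne_zero _ (by exact_mod_cast (Fact.out : p.Prime).ne_zero)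
    have hpos : 0 < p ^ n := pow_pos (Fact.out : p.Prime).pos n
    rw [tsum_eq_sum (s := Finset.range (p ^ n))]
    · have hexp : (1 + B) ^ (p ^ n) - 1
          = ∑ j ∈ Finset.range (p ^ n), ((p ^ n).choose (j + 1) : ℚ_[p]) • B ^ (j + 1) := by
        rw [add_comm, (Commute.one_right B).add_pow, Finset.sum_range_succ']
        simp only [one_pow, mul_one, pow_zero, Nat.choose_zero_right, Nat.cast_one,
          add_sub_cancel_right]
        refine Finset.sum_congr rfl fun j _ => ?_
        rw [Nat.cast_smul_eq_nsmul, nsmul_eq_mul, Nat.cast_comm]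
      rw [hexp, Matrix.smul_apply, Matrix.sum_apply, Finset.smul_sum]
      refine Finset.sum_congr rfl fun j _ => ?_
      rw [Matrix.smul_apply, aux_choose, smul_eq_mul, smul_eq_mul, mul_assoc,
        inv_mul_cancel_left₀ hpn]
    · intro j hj
      rw [Finset.mem_range, not_lt] at hj
      rw [Nat.choose_eq_zero_of_lt (by omega)]
      simp
end

section
/- Let p be a prime, N ≥ 1, and A ∈ M_N(ℤ_p) with A ≡ 1 (mod p), i.e. all entries of A − 1 lie in pℤ_p. Define log(A) = Σ_{j=1}^∞ (−1)^{j−1} (A−1)^j / j ∈ M_N(ℚ_p) (a convergent series). Assume det(A − 1) ≠ 0 if p is odd, respectively det(A² − 1) ≠ 0 if p = 2. Then det(log(A)) ≠ 0. -/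
open Filter

lemma aux_entry {p : ℕ} [Fact p.Prime] {N : ℕ} (B : Matrix (Fin N) (Fin N) ℚ_[p])
    (hB : ∀ i j, ‖B i j‖ ≤ (p : ℝ)⁻¹) (k : ℕ) :
    ∀ i j, ‖(B ^ k) i j‖ ≤ ((p : ℝ)⁻¹) ^ k := by
  have hp0 : (0:ℝ) ≤ (p : ℝ)⁻¹ := by positivity
  induction k with
  | zero =>
    intro i j
    by_cases h : i = j <;> simp [Matrix.one_apply, h]
  | succ k ih =>
    intro i j
    rw [pow_succ, Matrix.mul_apply]
    refine IsUltrametricDist.norm_sum_le_of_forall_le_of_nonneg (by positivity) ?_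
    intro l _
    rw [norm_mul, pow_succ]
    exact mul_le_mul (ih i l) (hB l j) (norm_nonneg _) (by positivity)

lemma aux_inv_norm {p : ℕ} [Fact p.Prime] (k : ℕ) :
    ‖((k + 1 : ℕ) : ℚ_[p])‖⁻¹ ≤ ((k + 1 : ℕ) : ℝ) := by
  have h0 : ((k + 1 : ℕ) : ℚ_[p]) ≠ 0 := by exact_mod_cast Nat.succ_ne_zero k
  rw [Padic.norm_eq_zpow_neg_valuation h0, Padic.valuation_natCast, zpow_neg, inv_inv, zpow_natCast]
  exact_mod_cast Nat.le_of_dvd (Nat.succ_pos k) pow_padicValNat_dvd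

lemma aux_choose_s15 {p : ℕ} [Fact p.Prime] (k : ℕ) :
    Tendsto (fun n : ℕ => (((p ^ n - 1).choose k : ℕ) : ℚ_[p])) atTop (nhds ((-1) ^ k)) := by
  have hP : Tendsto (fun n : ℕ => (p : ℚ_[p]) ^ n) atTop (nhds 0) :=
    tendsto_pow_atTop_nhds_zero_of_norm_lt_one Padic.norm_p_lt_one
  induction k with
  | zero => simp
  | succ k ih =>
    have h0 : ((k + 1 : ℕ) : ℚ_[p]) ≠ 0 := by exact_mod_cast Nat.succ_ne_zero k
    have h1 := ((hP.mul ih).div_const ((k + 1 : ℕ) : ℚ_[p])).sub ih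
    have e : (0 * (-1) ^ k / ((k + 1 : ℕ) : ℚ_[p]) - (-1) ^ k) = (-1) ^ (k + 1) := by
      rw [pow_succ]; ring
    rw [e] at h1
    refine h1.congr fun n => ?_
    have hpos : 0 < p ^ n := pow_pos (Fact.out : p.Prime).pos n
    obtain ⟨m, hm⟩ : ∃ m, p ^ n = m + 1 := ⟨p ^ n - 1, by omega⟩
    have hm' : (p : ℚ_[p]) ^ n = ((m + 1 : ℕ) : ℚ_[p]) := by rw [← hm]; push_cast; rfl
    rw [hm', hm, Nat.add_sub_cancel]
    have h2 := Nat.add_one_mul_choose_eq m k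
    have h3 := Nat.choose_succ_succ m k
    rw [sub_eq_iff_eq_add, div_eq_iff h0, ← Nat.cast_mul, h2, Nat.succ_eq_add_one] at *
    rw [h3]; push_cast; ring

lemma aux_expand {p : ℕ} [Fact p.Prime] {N : ℕ} (B : Matrix (Fin N) (Fin N) ℚ_[p]) (m : ℕ) :
    (((m + 1 : ℕ) : ℚ_[p])⁻¹) • ((1 + B) ^ (m + 1) - 1) =
      ∑ k ∈ Finset.range (m + 1), ((m.choose k : ℚ_[p]) / ((k + 1 : ℕ) : ℚ_[p])) • B ^ (k + 1) := by
  rw [add_comm 1 B, (Commute.one_right B).add_pow, Finset.sum_range_succ']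
  simp only [one_pow, mul_one, pow_zero, Nat.choose_zero_right, Nat.cast_one, add_sub_cancel_right]
  rw [Finset.smul_sum]
  refine Finset.sum_congr rfl fun k _ => ?_
  have h0 : ((k + 1 : ℕ) : ℚ_[p]) ≠ 0 := by exact_mod_cast Nat.succ_ne_zero k
  have h1 : ((m + 1 : ℕ) : ℚ_[p]) ≠ 0 := by exact_mod_cast Nat.succ_ne_zero m
  have h2 := congrArg (Nat.cast : ℕ → ℚ_[p]) (Nat.add_one_mul_choose_eq m k)
  rw [Nat.cast_mul, Nat.cast_mul] at h2
  rw [← nsmul_eq_mul', ← Nat.cast_smul_eq_nsmul ℚ_[p], smul_smul]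
  congr 1
  rw [eq_div_iff h0, mul_assoc, ← h2, inv_mul_cancel_left₀ h1]

lemma aux_limit {p : ℕ} [Fact p.Prime] {N : ℕ} (A L : Matrix (Fin N) (Fin N) ℚ_[p])
    (hA1 : ∀ i j, ‖(A - 1) i j‖ ≤ (p : ℝ)⁻¹)
    (hL : Tendsto (fun m : ℕ => ∑ j ∈ Finset.Icc 1 m,
        ((-1 : ℚ_[p]) ^ (j - 1) / (j : ℚ_[p])) • (A - 1) ^ j) atTop (nhds L)) :
    Tendsto (fun n : ℕ => ((p : ℚ_[p]) ^ n)⁻¹ • (A ^ (p ^ n) - 1)) atTop (nhds L) := by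
  set B := A - 1 with hBdef
  have hAB : A = 1 + B := by rw [hBdef]; abel
  have hp1 : (1:ℝ) < p := by exact_mod_cast (Fact.out : p.Prime).one_lt
  have hq : (p : ℝ)⁻¹ < 1 := inv_lt_one_of_one_lt₀ hp1
  have hq0 : (0:ℝ) ≤ (p : ℝ)⁻¹ := by positivity
  refine tendsto_pi_nhds.2 fun i => tendsto_pi_nhds.2 fun j => ?_
  have hLij := tendsto_pi_nhds.1 (tendsto_pi_nhds.1 hL i) j
  have hsum : Summable (fun k : ℕ => ((k + 1 : ℕ) : ℝ) * ((p : ℝ)⁻¹) ^ (k + 1)) := by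
    have := summable_pow_mul_geometric_of_norm_lt_one 1 (r := (p : ℝ)⁻¹)
      (by rwa [Real.norm_of_nonneg hq0])
    simp only [pow_one] at this
    exact (summable_nat_add_iff 1).2 this
  have hbd : ∀ (c : ℚ_[p]) (k : ℕ), ‖c‖ ≤ 1 →
      ‖c / ((k + 1 : ℕ) : ℚ_[p]) * (B ^ (k + 1)) i j‖ ≤
        ((k + 1 : ℕ) : ℝ) * ((p : ℝ)⁻¹) ^ (k + 1) := by
    intro c k hc
    rw [norm_mul, norm_div, div_eq_mul_inv]
    refine mul_le_mul ?_ (aux_entry B hA1 _ i j) (norm_nonneg _) (by positivity)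
    calc ‖c‖ * ‖((k + 1 : ℕ) : ℚ_[p])‖⁻¹ ≤ 1 * ‖((k + 1 : ℕ) : ℚ_[p])‖⁻¹ := by gcongr
      _ ≤ _ := by rw [one_mul]; exact aux_inv_norm k
  have hdom := tendsto_tsum_of_dominated_convergence (𝓕 := atTop)
    (f := fun (n k : ℕ) => (((p ^ n - 1).choose k : ℕ) : ℚ_[p]) / ((k + 1 : ℕ) : ℚ_[p])
      * (B ^ (k + 1)) i j)
    (g := fun k : ℕ => (-1 : ℚ_[p]) ^ k / ((k + 1 : ℕ) : ℚ_[p]) * (B ^ (k + 1)) i j)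
    hsum (fun k => ((aux_choose_s15 k).div_const _).mul_const _)
    (Eventually.of_forall fun n k => hbd _ k (by exact_mod_cast Padic.norm_int_le_one (p := p) (((p ^ n - 1).choose k : ℕ) : ℤ)))
  have hgs : Summable (fun k : ℕ => (-1 : ℚ_[p]) ^ k / ((k + 1 : ℕ) : ℚ_[p])
      * (B ^ (k + 1)) i j) :=
    Summable.of_norm_bounded hsum fun k => hbd _ k (by simp)
  have hT := hgs.hasSum.tendsto_sum_nat
  have hEq : ∑' k : ℕ, (-1 : ℚ_[p]) ^ k / ((k + 1 : ℕ) : ℚ_[p]) * (B ^ (k + 1)) i j = L i j := by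
    refine tendsto_nhds_unique hT (hLij.congr fun m => ?_)
    rw [Matrix.sum_apply, ← Finset.Ico_add_one_right_eq_Icc, Finset.sum_Ico_eq_sum_range]
    refine Finset.sum_congr (by simp) fun k _ => ?_
    rw [add_comm 1 k]
    simp
  rw [hEq] at hdom
  refine hdom.congr fun n => ?_
  have hpos : 0 < p ^ n := pow_pos (Fact.out : p.Prime).pos n
  obtain ⟨m, hm⟩ : ∃ m, p ^ n = m + 1 := ⟨p ^ n - 1, by omega⟩
  have hm' : (p : ℚ_[p]) ^ n = ((m + 1 : ℕ) : ℚ_[p]) := by rw [← hm]; push_cast; rfl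
  rw [hm', hm, hAB, aux_expand, Nat.add_sub_cancel, Matrix.sum_apply]
  rw [tsum_eq_sum (s := Finset.range (m + 1))]
  · rfl
  · intro k hk
    rw [Nat.choose_eq_zero_of_lt (by simpa using hk)]
    simp

lemma aux_unit {p : ℕ} [Fact p.Prime] {N : ℕ} (M : Matrix (Fin N) (Fin N) ℤ_[p]) :
    ‖(1 + (p : ℤ_[p]) • M).det‖ = 1 := by
  rw [← PadicInt.isUnit_iff]
  by_contra h
  have h1 : (1 + (p : ℤ_[p]) • M).det ∈ RingHom.ker (PadicInt.toZMod (p := p)) := by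
    rw [PadicInt.ker_toZMod]
    exact (IsLocalRing.mem_maximalIdeal _).2 h
  rw [RingHom.mem_ker, RingHom.map_det] at h1
  have : (PadicInt.toZMod (p := p)).mapMatrix (1 + (p : ℤ_[p]) • M) = 1 := by
    rw [map_add, map_one]
    ext a b
    simp
  rw [this] at h1
  simp at h1

lemma aux_pow {R : Type*} [CommRing R] {N : ℕ} (r : R) (Y : Matrix (Fin N) (Fin N) R) (i : ℕ) :
    ∃ W : Matrix (Fin N) (Fin N) R,
      (1 + r • Y) ^ i = 1 + ((i : R) * r) • Y + (r * r) • W := by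
  induction i with
  | zero => exact ⟨0, by simp⟩
  | succ i ih =>
    obtain ⟨W, hW⟩ := ih
    refine ⟨(i : R) • (Y * Y) + W + r • (W * Y), ?_⟩
    rw [pow_succ, hW]
    simp only [mul_add, add_mul, mul_one, one_mul, smul_mul_assoc, mul_smul_comm, smul_smul,
      smul_add, Nat.cast_add, Nat.cast_one, add_smul]
    module

lemma aux_step_odd {p : ℕ} [Fact p.Prime] (hp : p ≠ 2) {N : ℕ}
    (Y : Matrix (Fin N) (Fin N) ℤ_[p]) :
    ∃ M : Matrix (Fin N) (Fin N) ℤ_[p], (1 + (p : ℤ_[p]) • Y) ^ p - 1 =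
      (p : ℤ_[p]) • (((1 + (p : ℤ_[p]) • Y) - 1) * (1 + (p : ℤ_[p]) • M)) := by
  choose W hW using aux_pow (p : ℤ_[p]) Y
  obtain ⟨c, hc⟩ := (Fact.out : p.Prime).odd_of_ne_two hp
  have hs : ∑ i ∈ Finset.range p, i = p * c := by
    have := Finset.sum_range_id_mul_two p
    have h2 : p - 1 = c * 2 := by omega
    rw [h2, ← mul_assoc] at this
    exact Nat.eq_of_mul_eq_mul_right two_pos this
  refine ⟨(c : ℤ_[p]) • Y + ∑ i ∈ Finset.range p, W i, ?_⟩
  rw [← mul_geom_sum, ← mul_smul_comm]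
  congr 1
  rw [Finset.sum_congr rfl fun i _ => hW i, Finset.sum_add_distrib, Finset.sum_add_distrib,
    ← Finset.smul_sum, ← Finset.sum_smul, ← Finset.sum_mul, ← Nat.cast_sum, hs]
  simp only [Finset.sum_const, Finset.card_range, ← Nat.cast_smul_eq_nsmul ℤ_[p]]
  push_cast
  module

/-- The iteration: if `X = 1 + r Y` with `r` good, the determinant norm scales. -/
lemma aux_iter {p : ℕ} [Fact p.Prime] {N : ℕ} (r : ℤ_[p])
    (hr : ∀ Y : Matrix (Fin N) (Fin N) ℤ_[p], ∃ M : Matrix (Fin N) (Fin N) ℤ_[p],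
      (1 + r • Y) ^ p - 1 = (p : ℤ_[p]) • (((1 + r • Y) - 1) * (1 + (p : ℤ_[p]) • M)))
    (n : ℕ) : ∀ Y : Matrix (Fin N) (Fin N) ℤ_[p],
      ‖((1 + r • Y) ^ (p ^ n) - 1).det‖ = (‖(p : ℤ_[p])‖ ^ n) ^ N * ‖(r • Y).det‖ := by
  induction n with
  | zero => intro Y; simp
  | succ n ih =>
    intro Y
    obtain ⟨M, hM⟩ := hr Y
    have e : (1 + r • Y) ^ p = 1 + r • ((p : ℤ_[p]) • (Y * (1 + (p : ℤ_[p]) • M))) := by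
      rw [eq_add_of_sub_eq hM, add_sub_cancel_left, add_comm, smul_mul_assoc, smul_comm]
    rw [pow_succ' p n, pow_mul, e, ih, ← sub_eq_iff_eq_add'.2 e, hM, Matrix.det_smul,
      Matrix.det_mul, norm_mul, norm_mul, aux_unit, add_sub_cancel_left, norm_pow,
      Fintype.card_fin, pow_succ, mul_pow]
    ring

lemma aux_main {p : ℕ} [Fact p.Prime] {N : ℕ} (r : ℤ_[p])
    (hr : ∀ Y : Matrix (Fin N) (Fin N) ℤ_[p], ∃ M : Matrix (Fin N) (Fin N) ℤ_[p],
      (1 + r • Y) ^ p - 1 = (p : ℤ_[p]) • (((1 + r • Y) - 1) * (1 + (p : ℤ_[p]) • M)))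
    (Y : Matrix (Fin N) (Fin N) ℤ_[p]) (X L : Matrix (Fin N) (Fin N) ℚ_[p])
    (hX : X = (PadicInt.Coe.ringHom (p := p)).mapMatrix (1 + r • Y))
    (hdet : (X - 1).det ≠ 0)
    (hL : Tendsto (fun n : ℕ => ((p : ℚ_[p]) ^ n)⁻¹ • (X ^ (p ^ n) - 1)) atTop (nhds L)) :
    L.det ≠ 0 := by
  have key : ∀ n : ℕ, ‖(((p : ℚ_[p]) ^ n)⁻¹ • (X ^ (p ^ n) - 1)).det‖ = ‖(X - 1).det‖ := by
    intro n
    have h1 : ∀ m : ℕ, ‖(X ^ m - 1).det‖ = ‖((1 + r • Y) ^ m - 1).det‖ := by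
      intro m
      rw [hX, ← map_pow, ← map_one (PadicInt.Coe.ringHom (p := p)).mapMatrix, ← map_sub,
        ← RingHom.map_det]
      rfl
    have h2 := h1 1
    rw [pow_one, pow_one, add_sub_cancel_left] at h2
    have hp0 : ‖(p : ℚ_[p])‖ ≠ 0 := by
      rw [norm_ne_zero_iff]; exact_mod_cast (Fact.out : p.Prime).ne_zero
    rw [Matrix.det_smul, norm_mul, h1, aux_iter r hr, h2, Fintype.card_fin, norm_pow, norm_inv,
      norm_pow]
    have : ‖(p : ℤ_[p])‖ = ‖(p : ℚ_[p])‖ := by simp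
    rw [this, ← mul_assoc, inv_pow, inv_mul_cancel₀ (by positivity), one_mul]
  have hc : Tendsto (fun n : ℕ => ‖(((p : ℚ_[p]) ^ n)⁻¹ • (X ^ (p ^ n) - 1)).det‖) atTop
      (nhds ‖L.det‖) :=
    ((continuous_id.matrix_det.norm).tendsto L).comp hL
  simp only [key] at hc
  have := tendsto_nhds_unique hc tendsto_const_nhds
  rw [← norm_ne_zero_iff, this, norm_ne_zero_iff]
  exact hdet

lemma aux_lift {p : ℕ} [Fact p.Prime] {N : ℕ} (A : Matrix (Fin N) (Fin N) ℚ_[p])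
    (hA1 : ∀ i j, ‖(A - 1) i j‖ ≤ (p : ℝ)⁻¹) :
    ∃ Y : Matrix (Fin N) (Fin N) ℤ_[p],
      A = (PadicInt.Coe.ringHom (p := p)).mapMatrix (1 + (p : ℤ_[p]) • Y) := by
  have hp0 : (p : ℚ_[p]) ≠ 0 := by exact_mod_cast (Fact.out : p.Prime).ne_zero
  have hpp : (0:ℝ) < p := by exact_mod_cast (Fact.out : p.Prime).pos
  have h : ∀ i j, ∃ y : ℤ_[p], (y : ℚ_[p]) = (p : ℚ_[p])⁻¹ * (A - 1) i j := by
    intro i j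
    refine ⟨⟨(p : ℚ_[p])⁻¹ * (A - 1) i j, ?_⟩, rfl⟩
    rw [norm_mul, norm_inv, Padic.norm_p, inv_inv]
    calc (p : ℝ) * ‖(A - 1) i j‖ ≤ p * (p : ℝ)⁻¹ := by gcongr; exact hA1 i j
      _ = 1 := mul_inv_cancel₀ hpp.ne'
  choose Y hY using h
  refine ⟨Matrix.of Y, ?_⟩
  rw [map_add, map_one, ← sub_eq_iff_eq_add']
  ext i j
  change (A - 1) i j = (((p : ℤ_[p]) * Y i j : ℤ_[p]) : ℚ_[p])
  rw [PadicInt.coe_mul, PadicInt.coe_natCast, hY, mul_inv_cancel_left₀ hp0]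

/-- Let `A ∈ M_N(ℤ_p)` with `A ≡ 1 (mod p)`, and `L = log A` (the limit of the
logarithm series).  If `det(A - 1) ≠ 0` (for `p` odd), resp. `det(A² - 1) ≠ 0`
(for `p = 2`), then `det(log A) ≠ 0`. -/
theorem padic_matrix_det_log_ne_zero (p : ℕ) [Fact p.Prime] (N : ℕ) (hN : 1 ≤ N)
    (A : Matrix (Fin N) (Fin N) ℚ_[p])
    (hA : ∀ i j, ‖A i j‖ ≤ 1)
    (hA1 : ∀ i j, ‖(A - 1) i j‖ ≤ (p : ℝ)⁻¹)
    (L : Matrix (Fin N) (Fin N) ℚ_[p])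
    (hL : Tendsto (fun m : ℕ => ∑ j ∈ Finset.Icc 1 m,
        ((-1 : ℚ_[p]) ^ (j - 1) / (j : ℚ_[p])) • (A - 1) ^ j) atTop (nhds L))
    (hdet : if p = 2 then (A ^ 2 - 1).det ≠ 0 else (A - 1).det ≠ 0) :
    L.det ≠ 0 := by
  have hlim := aux_limit A L hA1 hL
  obtain ⟨Y, hY⟩ := aux_lift A hA1
  by_cases hp : p = 2
  · rw [if_pos hp] at hdet
    subst hp
    have h4 : Tendsto (fun n : ℕ => (((2 : ℕ) : ℚ_[2]) ^ n)⁻¹ • ((A ^ 2) ^ (2 ^ n) - 1)) atTop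
        (nhds (((2 : ℕ) : ℚ_[2]) • L)) := by
      have h5 := ((tendsto_add_atTop_iff_nat 1).2 hlim).const_smul (((2 : ℕ) : ℚ_[2]))
      refine h5.congr fun n => ?_
      have h20 : ((2 : ℕ) : ℚ_[2]) ≠ 0 := by norm_num
      rw [smul_smul, ← pow_mul, ← pow_succ' 2 n, pow_succ' ((2 : ℕ) : ℚ_[2]), mul_inv,
        mul_inv_cancel_left₀ h20]
    have := aux_main (p := 2) (4 : ℤ_[2]) (fun Z => ⟨Z, by
        push_cast
        simp only [pow_two, mul_add, add_mul, mul_one, one_mul, smul_mul_assoc, mul_smul_comm,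
          smul_smul, smul_add, add_sub_cancel_left]
        module⟩) (Y + Y * Y) (A ^ 2) _ (by
        rw [hY, ← map_pow]
        congr 1
        push_cast
        simp only [pow_two, mul_add, add_mul, mul_one, one_mul, smul_mul_assoc, mul_smul_comm,
          smul_smul, smul_add]
        module) hdet h4
    intro h0
    apply this
    rw [Matrix.det_smul, h0, mul_zero]
  · rw [if_neg hp] at hdet
    exact aux_main (p : ℤ_[p]) (aux_step_odd hp) Y A L hY hdet hlim
end

section
/- Let p be a prime and I a countable set. Equip the ℤ_p-module ∏_{i∈I} ℤ_p of all functions I → ℤ_p with the product topology (topology of pointwise convergence), and for i ∈ I let δ_i denote the function with value 1 at i and 0 elsewhere. Let M be a compact Hausdorff topological ℤ_p-module admitting a neighborhood base of 0 consisting of open ℤ_p-submodules, and let f : I → M be 0-convergent, i.e. for every open submodule U ≤ M all but finitely many i ∈ I satisfy f(i) ∈ U. Then there exists a unique continuous ℤ_p-linear map f̃ : ∏_{i∈I} ℤ_p → M such that f̃(δ_i) = f(i) for all i ∈ I. -/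
/-- Universal property of the free profinite `ℤ_p`-module on a countable set `I`:
every `0`-convergent map `f : I → M` to a profinite `ℤ_p`-module extends uniquely to a
continuous `ℤ_p`-linear map `∏_{i ∈ I} ℤ_p → M` sending `δ_i` to `f i`. -/
theorem free_profinite_zp_module_universal_property
    (p : ℕ) [Fact p.Prime] (I : Type*) [Countable I] [DecidableEq I]
    (M : Type*) [AddCommGroup M] [Module ℤ_[p] M] [TopologicalSpace M]
    [IsTopologicalAddGroup M] [ContinuousSMul ℤ_[p] M] [CompactSpace M] [T2Space M]
    (hbase : ∀ U ∈ nhds (0 : M),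
      ∃ W : Submodule ℤ_[p] M, IsOpen (W : Set M) ∧ (W : Set M) ⊆ U)
    (f : I → M)
    (hf : ∀ W : Submodule ℤ_[p] M, IsOpen (W : Set M) → {i : I | f i ∉ W}.Finite) :
    ∃! F : (I → ℤ_[p]) →ₗ[ℤ_[p]] M,
      Continuous F ∧ ∀ i : I, F (Pi.single i 1) = f i := by
  classical
  letI : UniformSpace M := IsTopologicalAddGroup.rightUniformSpace M
  haveI : IsUniformAddGroup M := isUniformAddGroup_of_addCommGroup
  haveI : NonarchimedeanAddGroup M := by
    refine ⟨fun U hU => ?_⟩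
    obtain ⟨W, hW, hWU⟩ := hbase U hU
    exact ⟨⟨W.toAddSubgroup, hW⟩, hWU⟩
  have hsum : ∀ x : I → ℤ_[p], Summable (fun i => x i • f i) := by
    intro x
    apply NonarchimedeanAddGroup.summable_of_tendsto_cofinite_zero
    intro U hU
    obtain ⟨W, hW, hWU⟩ := hbase U hU
    refine Filter.mem_cofinite.2 ((hf W hW).subset ?_)
    intro i hi hfi
    exact hi (hWU (W.smul_mem _ hfi))
  let F : (I → ℤ_[p]) →ₗ[ℤ_[p]] M :=
    { toFun := fun x => ∑' i, x i • f i
      map_add' := fun x y => by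
        simp only [Pi.add_apply, add_smul]
        exact (hsum x).tsum_add (hsum y)
      map_smul' := fun c x => by
        simp only [Pi.smul_apply, smul_eq_mul, mul_smul, RingHom.id_apply]
        exact (hsum x).tsum_const_smul c }
  refine ⟨F, ⟨?_, ?_⟩, ?_⟩
  · apply continuous_of_continuousAt_zero F
    rw [ContinuousAt, map_zero]
    intro U hU
    obtain ⟨W, hW, hWU⟩ := hbase U hU
    have hcl : IsClosed (W : Set M) := AddSubgroup.isClosed_of_isOpen W.toAddSubgroup hW
    have hev : ∀ᶠ x : I → ℤ_[p] in nhds 0, ∀ i ∈ {i : I | f i ∉ W}, x i • f i ∈ W := by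
      rw [Filter.eventually_all_finite (hf W hW)]
      intro i _
      have hc : Continuous (fun x : I → ℤ_[p] => x i • f i) := by fun_prop
      exact hc.continuousAt.eventually_mem (hW.mem_nhds (by simp))
    rw [Filter.mem_map]
    filter_upwards [hev] with x hx
    apply hWU
    refine hcl.mem_of_tendsto (hsum x).hasSum (Filter.Eventually.of_forall fun s => ?_)
    refine W.sum_mem fun i _ => ?_
    by_cases h : f i ∈ W
    · exact W.smul_mem _ h
    · exact hx i h
  · intro i
    change ∑' j, (Pi.single i (1 : ℤ_[p]) : I → ℤ_[p]) j • f j = f i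
    rw [tsum_eq_single i]
    · simp
    · intro j hj
      simp [Pi.single_eq_of_ne hj]
  · rintro G ⟨hG, hGf⟩
    ext x
    have hx : HasSum (fun i => (Pi.single i (x i) : I → ℤ_[p])) x := by
      rw [Pi.hasSum]
      intro j
      have := hasSum_single (f := fun i => (Pi.single i (x i) : I → ℤ_[p]) j) j
        (fun i hi => Pi.single_eq_of_ne hi.symm _)
      simpa using this
    have h2 := hx.map G hG
    have h3 : (G ∘ fun i => (Pi.single i (x i) : I → ℤ_[p])) = fun i => x i • f i := by
      funext i
      rw [← hGf i, ← map_smul, ← Pi.single_smul]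
      simp
    rw [h3] at h2
    exact h2.tsum_eq.symm
end
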